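/- Right bilinearity of the Poincaré bundle: there is a unique map Φ_r, defined on pairs (p, q) ∈ P × P with π₁(p) = π₁(q), such that Φ_r([a, b, t], [a, c, s]) = [a, b + c, s + t] for all a, b, c ∈ ℝⁿ and s, t ∈ T; equivalently, on arbitrary representatives with a − a' ∈ ℤⁿ one has Φ_r([a, b, t], [a', c, s]) = [a, b + c, ↑((a − a')⋅c) + s + t]. It satisfies π₂(Φ_r(p,q)) = π₂(p) + π₂(q), π₁(Φ_r(p,q)) = π₁(p), the balancing relations Φ_r(p + z, q) = Φ_r(p, q) + z = Φ_r(p, q + z) for z ∈ T, and associativity: Φ_r(Φ_r(p, q), r) = Φ_r(p, Φ_r(q, r)) whenever π₁(p) = π₁(q) = π₁(r). -/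

import Mathlib

/-!
Any class in `P` lying over the point `↑a` of the torus has a representative whose first coordinate
is exactly `a` (`exists_rep`): translate a given representative by a lattice vector. Hence every
pair `(p, q)` with `π₁(p) = π₁(q)` has the form `([a,b,t], [a,c,s])`. This makes `Φ_r` unique, and
reduces the projection formulas, the balancing relations and associativity to identities in
`ℝⁿ × T` (`IsPhiR.apply_eq`).

For existence, the formula on arbitrary representatives,
`([a,b,t], [a',c,s]) ↦ [a, b+c, ↑((a−a')⋅c) + s + t]` for `a − a' ∈ ℤⁿ`, descends to the quotient
in each variable. Replacing `(a,b,t)` by `(a+m, b+m̂, t+↑(m⋅b))` adds `↑(m⋅(b+c))` to the circle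
coordinate, as the Poincaré relation requires. Replacing `(a',c,s)` by `(a'+m, c+m̂, s+↑(m⋅c))`
changes the real number `(a−a')⋅c + m⋅c` by the integer `(a−a'−m)⋅m̂`, which vanishes in `T`.
-/

open Matrix

noncomputable section

/-- The circle `T = ℝ/ℤ`. -/
abbrev Tc : Type := AddCircle (1 : ℝ)

/-- Componentwise inclusion `ℤⁿ → ℝⁿ`. -/
def zc {n : ℕ} (m : Fin n → ℤ) : Fin n → ℝ := fun i => (m i : ℝ)

/-- The Poincaré relation on `ℝⁿ × ℝⁿ × T`:
`(a,â,t) ~ (a+m, â+m̂, t+↑(m⋅â))` for `m, m̂ ∈ ℤⁿ`. -/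
def PoincareRel (n : ℕ) (p q : (Fin n → ℝ) × (Fin n → ℝ) × Tc) : Prop :=
  ∃ m mhat : Fin n → ℤ,
    q.1 = p.1 + zc m ∧ q.2.1 = p.2.1 + zc mhat ∧
      q.2.2 = p.2.2 + ((dotProduct (zc m) p.2.1 : ℝ) : Tc)

/-- The total space `P` of the Poincaré bundle: the quotient of `ℝⁿ × ℝⁿ × T`
by the Poincaré relation. -/
def PB (n : ℕ) : Type := Quot (PoincareRel n)

/-- The class `[a, â, t]` in `P`. -/
def mk3 {n : ℕ} (a ahat : Fin n → ℝ) (t : Tc) : PB n := Quot.mk _ (a, ahat, t)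

/-- The circle action on `P`: `[a, â, t] + s := [a, â, t + s]` (well defined). -/
def PBadd {n : ℕ} (p : PB n) (s : Tc) : PB n :=
  Quot.lift (fun q => mk3 q.1 q.2.1 (q.2.2 + s))
    (fun r r' h => by
      obtain ⟨m, mhat, h1, h2, h3⟩ := h
      refine Quot.sound ⟨m, mhat, h1, h2, ?_⟩
      show r'.2.2 + s = r.2.2 + s + ((dotProduct (zc m) r.2.1 : ℝ) : Tc)
      rw [h3]; abel)
    p

lemma coe_int_eq_zero (k : ℤ) : ((k : ℝ) : Tc) = 0 :=
  (AddCircle.coe_eq_zero_iff (1 : ℝ)).mpr ⟨k, by simp⟩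

/-- Projection `π₁ : P → Tⁿ` remembering the first `ℝⁿ`-coordinate. -/
def proj1 {n : ℕ} : PB n → (Fin n → Tc) :=
  Quot.lift (fun p => fun i => ((p.1 i : ℝ) : Tc))
    (fun r r' h => by
      obtain ⟨m, mhat, h1, h2, h3⟩ := h
      show (fun i => ((r.1 i : ℝ) : Tc)) = fun i => ((r'.1 i : ℝ) : Tc)
      funext i
      have hq : r'.1 i = r.1 i + (m i : ℝ) := by rw [h1]; rfl
      rw [hq, AddCircle.coe_add, coe_int_eq_zero, add_zero])

/-- Projection `π₂ : P → Tⁿ` remembering the second `ℝⁿ`-coordinate. -/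
def proj2 {n : ℕ} : PB n → (Fin n → Tc) :=
  Quot.lift (fun p => fun i => ((p.2.1 i : ℝ) : Tc))
    (fun r r' h => by
      obtain ⟨m, mhat, h1, h2, h3⟩ := h
      show (fun i => ((r.2.1 i : ℝ) : Tc)) = fun i => ((r'.2.1 i : ℝ) : Tc)
      funext i
      have hq : r'.2.1 i = r.2.1 i + (mhat i : ℝ) := by rw [h2]; rfl
      rw [hq, AddCircle.coe_add, coe_int_eq_zero, add_zero])

/-- The defining property of the right multiplication `Φ_r` of the Poincaré bundle,
defined on pairs with equal first projection:
`Φ_r([a, b, t], [a, c, s]) = [a, b + c, s + t]`. -/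
def IsPhiR (n : ℕ) (Phi : (p : PB n) → (q : PB n) → proj1 p = proj1 q → PB n) : Prop :=
  ∀ (a b c : Fin n → ℝ) (t s : Tc) (h : proj1 (mk3 a b t) = proj1 (mk3 a c s)),
    Phi (mk3 a b t) (mk3 a c s) h = mk3 a (b + c) (s + t)

lemma zc_dotProduct_zc_coe {n : ℕ} (m k : Fin n → ℤ) :
    ((dotProduct (zc m) (zc k) : ℝ) : Tc) = 0 := by
  have h : dotProduct (zc m) (zc k) = ((dotProduct m k : ℤ) : ℝ) := by
    simp [dotProduct, zc]
  rw [h, coe_int_eq_zero]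

lemma zc_add {n : ℕ} (m k : Fin n → ℤ) : zc (m + k) = zc m + zc k := by
  funext i; simp [zc]

lemma zc_sub {n : ℕ} (m k : Fin n → ℤ) : zc (m - k) = zc m - zc k := by
  funext i; simp [zc]

lemma zc_zero {n : ℕ} : zc (0 : Fin n → ℤ) = 0 := by
  funext i; simp [zc]

lemma mk3_translate {n : ℕ} (a b : Fin n → ℝ) (t : Tc) (m k : Fin n → ℤ) :
    mk3 (a + zc m) (b + zc k) (t + ((dotProduct (zc m) b : ℝ) : Tc)) = mk3 a b t :=
  (Quot.sound ⟨m, k, rfl, rfl, rfl⟩).symm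

lemma mk3_eq_of_sub_eq {n : ℕ} {a a' : Fin n → ℝ} (c : Fin n → ℝ) (s : Tc) {m : Fin n → ℤ}
    (hm : a - a' = zc m) :
    mk3 a' c s = mk3 a c (s + ((dotProduct (a - a') c : ℝ) : Tc)) := by
  have h := mk3_translate a' c s m 0
  rw [zc_zero, add_zero, ← hm, add_sub_cancel] at h
  exact h.symm

lemma exists_zc_of_proj1_eq {n : ℕ} {a a' b c : Fin n → ℝ} {t s : Tc}
    (h : proj1 (mk3 a b t) = proj1 (mk3 a' c s)) : ∃ m : Fin n → ℤ, a - a' = zc m := by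
  have key : ∀ i, ∃ k : ℤ, a i - a' i = (k : ℝ) := fun i => by
    have hi : ((a i : ℝ) : Tc) = ((a' i : ℝ) : Tc) := congrFun h i
    have h0 : ((a i - a' i : ℝ) : Tc) = 0 := by
      rw [AddCircle.coe_sub, hi, sub_self]
    obtain ⟨k, hk⟩ := (AddCircle.coe_eq_zero_iff (1 : ℝ)).mp h0
    exact ⟨k, by simpa using hk.symm⟩
  choose m hm using key
  exact ⟨m, funext hm⟩

/-- The first coordinate of a representative can be prescribed arbitrarily within its class
modulo `ℤⁿ`. -/
lemma exists_rep {n : ℕ} {a b : Fin n → ℝ} {t : Tc} (q : PB n)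
    (h : proj1 (mk3 a b t) = proj1 q) : ∃ c s, q = mk3 a c s := by
  induction q using Quot.ind with
  | mk y =>
    obtain ⟨a', c, s⟩ := y
    obtain ⟨m, hm⟩ := exists_zc_of_proj1_eq (a' := a') (c := c) (s := s) h
    exact ⟨c, _, mk3_eq_of_sub_eq c s hm⟩

lemma exists_mk3 {n : ℕ} (p : PB n) : ∃ a b t, p = mk3 a b t := by
  induction p using Quot.ind with
  | mk x => exact ⟨x.1, x.2.1, x.2.2, rfl⟩

/-- The defining property in a form usable when the arguments are only propositionally equal to
classes `mk3`, since the third argument of `Phi` depends on them. -/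
lemma IsPhiR.apply_eq {n : ℕ} {Phi : (p : PB n) → (q : PB n) → proj1 p = proj1 q → PB n}
    (H : IsPhiR n Phi) {p q : PB n} {a b c : Fin n → ℝ} {t s : Tc}
    (hp : p = mk3 a b t) (hq : q = mk3 a c s) (h : proj1 p = proj1 q) :
    Phi p q h = mk3 a (b + c) (s + t) := by
  subst hp hq
  exact H a b c t s h

open Classical in
/-- Right multiplication on representatives. Pairs whose first coordinates do not differ by an
integer vector get the value `[0, 0, 0]`, so that the map is defined on all pairs and descends to
the quotient without a dependence on the equality of first projections. -/
def phiRep {n : ℕ} (x y : (Fin n → ℝ) × (Fin n → ℝ) × Tc) : PB n :=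
  if ∃ m : Fin n → ℤ, x.1 - y.1 = zc m then
    mk3 x.1 (x.2.1 + y.2.1) (((dotProduct (x.1 - y.1) y.2.1 : ℝ) : Tc) + y.2.2 + x.2.2)
  else mk3 0 0 0

lemma phiRep_left {n : ℕ} (x x' y : (Fin n → ℝ) × (Fin n → ℝ) × Tc)
    (h : PoincareRel n x x') : phiRep x y = phiRep x' y := by
  obtain ⟨a, b, t⟩ := x
  obtain ⟨a₁, b₁, t₁⟩ := x'
  obtain ⟨a', c, s⟩ := y
  obtain ⟨m, k, h1, h2, h3⟩ := h
  dsimp only at h1 h2 h3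
  subst h1 h2 h3
  unfold phiRep
  dsimp only
  by_cases hc : ∃ l : Fin n → ℤ, a - a' = zc l
  · have hc' : ∃ l : Fin n → ℤ, a + zc m - a' = zc l := by
      obtain ⟨l, hl⟩ := hc
      exact ⟨l + m, by rw [zc_add, ← hl]; abel⟩
    rw [if_pos hc, if_pos hc', ← mk3_translate a (b + c) _ m k]
    congr 1
    · abel
    · rw [show a + zc m - a' = (a - a') + zc m by abel, add_dotProduct, dotProduct_add,
        AddCircle.coe_add, AddCircle.coe_add]
      abel
  · have hc' : ¬ ∃ l : Fin n → ℤ, a + zc m - a' = zc l := by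
      rintro ⟨l, hl⟩
      exact hc ⟨l - m, by rw [zc_sub, ← hl]; abel⟩
    rw [if_neg hc, if_neg hc']

lemma phiRep_right {n : ℕ} (x y y' : (Fin n → ℝ) × (Fin n → ℝ) × Tc)
    (h : PoincareRel n y y') : phiRep x y = phiRep x y' := by
  obtain ⟨a, b, t⟩ := x
  obtain ⟨a', c, s⟩ := y
  obtain ⟨a₁, c₁, s₁⟩ := y'
  obtain ⟨m, k, h1, h2, h3⟩ := h
  dsimp only at h1 h2 h3
  subst h1 h2 h3
  unfold phiRep
  dsimp only
  by_cases hc : ∃ l : Fin n → ℤ, a - a' = zc l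
  · obtain ⟨l, hl⟩ := hc
    have hl' : a - (a' + zc m) = zc (l - m) := by rw [zc_sub, ← hl]; abel
    rw [if_pos ⟨l, hl⟩, if_pos ⟨l - m, hl'⟩, ← mk3_translate a (b + c) _ 0 k]
    congr 1
    · rw [zc_zero, add_zero]
    · abel
    · rw [hl', dotProduct_add (zc (l - m)), AddCircle.coe_add, zc_dotProduct_zc_coe, zc_sub, sub_dotProduct (zc l),
        AddCircle.coe_sub, zc_zero, zero_dotProduct, AddCircle.coe_zero, hl]
      abel
  · have hc' : ¬ ∃ l : Fin n → ℤ, a - (a' + zc m) = zc l := by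
      rintro ⟨l, hl⟩
      exact hc ⟨l + m, by rw [zc_add, ← hl]; abel⟩
    rw [if_neg hc, if_neg hc']

/-- The right multiplication `Φ_r`, extended by `[0, 0, 0]` to pairs with different first
projections. -/
def phiR {n : ℕ} (p q : PB n) : PB n :=
  Quot.lift₂ phiRep (fun x y y' h => phiRep_right x y y' h)
    (fun x x' y h => phiRep_left x x' y h) p q

lemma isPhiR_phiR (n : ℕ) : IsPhiR n (fun p q _ => phiR p q) := by
  intro a b c t s _
  change phiRep (a, b, t) (a, c, s) = _
  unfold phiRep
  dsimp only
  rw [if_pos ⟨0, by rw [zc_zero, sub_self]⟩, sub_self, zero_dotProduct, AddCircle.coe_zero,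
    zero_add]

/-- **right bilinearity of the Poincaré bundle.**  There is a unique map
`Φ_r` on pairs with `π₁(p) = π₁(q)` with `Φ_r([a,b,t],[a,c,s]) = [a,b+c,s+t]`; equivalently,
on arbitrary representatives with `a − a' ∈ ℤⁿ` one has
`Φ_r([a,b,t],[a',c,s]) = [a, b+c, ↑((a−a')⋅c) + s + t]`.  It satisfies
`π₂(Φ_r(p,q)) = π₂(p) + π₂(q)`, `π₁(Φ_r(p,q)) = π₁(p)`, the balancing relations, and
associativity. -/
theorem statement12 (n : ℕ) :
    (∃! Phi : (p : PB n) → (q : PB n) → proj1 p = proj1 q → PB n, IsPhiR n Phi) ∧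
    (∀ Phi : (p : PB n) → (q : PB n) → proj1 p = proj1 q → PB n, IsPhiR n Phi →
      (∀ (a a' b c : Fin n → ℝ) (t s : Tc) (m : Fin n → ℤ), a - a' = zc m →
        ∀ h : proj1 (mk3 a b t) = proj1 (mk3 a' c s),
          Phi (mk3 a b t) (mk3 a' c s) h =
            mk3 a (b + c) (((dotProduct (a - a') c : ℝ) : Tc) + s + t)) ∧
      (∀ (p q : PB n) (h : proj1 p = proj1 q),
        proj2 (Phi p q h) = proj2 p + proj2 q) ∧
      (∀ (p q : PB n) (h : proj1 p = proj1 q),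
        proj1 (Phi p q h) = proj1 p) ∧
      (∀ (p q : PB n) (h : proj1 p = proj1 q) (z : Tc)
        (h₁ : proj1 (PBadd p z) = proj1 q) (h₂ : proj1 p = proj1 (PBadd q z)),
        Phi (PBadd p z) q h₁ = PBadd (Phi p q h) z ∧
        Phi p (PBadd q z) h₂ = PBadd (Phi p q h) z) ∧
      (∀ (p q r : PB n) (hpq : proj1 p = proj1 q) (hqr : proj1 q = proj1 r)
        (h₁ : proj1 (Phi p q hpq) = proj1 r) (h₂ : proj1 p = proj1 (Phi q r hqr)),
        Phi (Phi p q hpq) r h₁ = Phi p (Phi q r hqr) h₂)) := by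
  refine ⟨⟨fun p q _ => phiR p q, isPhiR_phiR n, ?_⟩, ?_⟩
  · intro Psi H
    funext p q h
    obtain ⟨a, b, t, rfl⟩ := exists_mk3 p
    obtain ⟨c, s, rfl⟩ := exists_rep q h
    exact (H a b c t s h).trans (isPhiR_phiR n a b c t s h).symm
  intro Phi H
  refine ⟨?_, ?_, ?_, ?_, ?_⟩
  · intro a a' b c t s m hm h
    rw [H.apply_eq rfl (mk3_eq_of_sub_eq c s hm) h, add_comm s]
  · intro p q h
    obtain ⟨a, b, t, rfl⟩ := exists_mk3 p
    obtain ⟨c, s, rfl⟩ := exists_rep q h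
    rw [H a b c t s h]
    funext i
    exact AddCircle.coe_add (1 : ℝ) (b i) (c i)
  · intro p q h
    obtain ⟨a, b, t, rfl⟩ := exists_mk3 p
    obtain ⟨c, s, rfl⟩ := exists_rep q h
    rw [H a b c t s h]
    rfl
  · intro p q h z h₁ h₂
    obtain ⟨a, b, t, rfl⟩ := exists_mk3 p
    obtain ⟨c, s, rfl⟩ := exists_rep q h
    rw [H a b c t s h]
    constructor
    · refine (H.apply_eq (a := a) (b := b) (t := t + z) rfl rfl h₁).trans ?_
      rw [← add_assoc]
      rfl
    · refine (H.apply_eq (c := c) (s := s + z) rfl rfl h₂).trans ?_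
      rw [add_right_comm]
      rfl
  · intro p q r hpq hqr h₁ h₂
    obtain ⟨a, b, t, rfl⟩ := exists_mk3 p
    obtain ⟨c, s, rfl⟩ := exists_rep q hpq
    obtain ⟨d, u, rfl⟩ := exists_rep r hqr
    rw [H.apply_eq (H a b c t s hpq) rfl h₁, H.apply_eq rfl (H a c d s u hqr) h₂, add_assoc,
      add_assoc]
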